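/- Let H be a real Hilbert space, V a closed linear subspace of H, and I, J : H → ℝ Fréchet differentiable functionals whose gradients ∇I and ∇J are Lipschitz with constants ν and L respectively, where 0 ≤ ν < 2 and L > 0. Let r > 0, set C_r := { u ∈ V : ‖u‖² + I(u) = r }, and suppose there exist λ > L/(2 − ν) and u* ∈ C_r such that u* is a global minimum over V of the functional u ↦ J(u) + λ(‖u‖² + I(u)). Then u* is the unique global minimum of the restriction of J to C_r: J(u*) ≤ J(u) for all u ∈ C_r, and any u ∈ C_r with J(u) = J(u*) equals u*. -/

import Mathlib

/-!
`StrongConvexOn s m f` is meaningful for negative `m` too, where it allows a defect of convexity.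
A function with a `k`-Lipschitz gradient has modulus `-k`: by monotonicity of its difference with a
quadratic along segments, it lies above a downward paraboloid at each point. So `I`, `J` and
`‖·‖ ^ 2` have moduli `-ν`, `-L` and `2`, and for `λ > L / (2 - ν)` the penalized functional
`J + λ (‖·‖ ^ 2 + I)` has modulus `λ (2 - ν) - L > 0`; hence it has at most one minimizer. On a
level set of `‖·‖ ^ 2 + I` it differs from `J` by a constant, so a point there with the same value
of `J` as `u*` is again a minimizer of the penalized functional over all of `V`.
-/

theorem isMinOn_levelSet_of_isMinOn_add_mul {α : Type*} {s : Set α} {J G : α → ℝ} {c r : ℝ} {x : α}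
    (hmin : IsMinOn (fun u ↦ J u + c * G u) s x) (hx : G x = r) :
    IsMinOn J {u ∈ s | G u = r} x := by
  rintro u ⟨hus, hur⟩
  have hxu : J x + c * G x ≤ J u + c * G u := hmin hus
  rw [hx, hur] at hxu
  exact le_of_add_le_add_right hxu

section NormedSpace

variable {E : Type*} [NormedAddCommGroup E] [NormedSpace ℝ E] {s : Set E} {f g : E → ℝ}
  {f' : E → StrongDual ℝ E} {m n c k : ℝ}

theorem strongConvexOn_add (hf : StrongConvexOn s m f) (hg : StrongConvexOn s n g) :
    StrongConvexOn s (m + n) (fun x ↦ f x + g x) := by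
  refine (UniformConvexOn.add hf hg).mono fun t ↦ le_of_eq ?_
  simp only [Pi.add_apply]
  ring

theorem strongConvexOn_const_mul (hc : 0 ≤ c) (hf : StrongConvexOn s m f) :
    StrongConvexOn s (c * m) (fun x ↦ c * f x) := by
  refine ⟨hf.1, fun x hx y hy a b ha hb hab ↦ ?_⟩
  calc c * f (a • x + b • y)
      ≤ c * (a • f x + b • f y - a * b * (m / 2 * ‖x - y‖ ^ 2)) :=
        mul_le_mul_of_nonneg_left (hf.2 hx hy ha hb hab) hc
    _ = a • (c * f x) + b • (c * f y) - a * b * (c * m / 2 * ‖x - y‖ ^ 2) := by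
        simp only [smul_eq_mul]
        ring

theorem strongConvexOn_of_forall_quadratic_le (hs : Convex ℝ s)
    (hf : ∀ x ∈ s, ∀ y ∈ s, f x + f' x (y - x) + m / 2 * ‖y - x‖ ^ 2 ≤ f y) :
    StrongConvexOn s m f := by
  refine ⟨hs, fun x hx y hy a b ha hb hab ↦ ?_⟩
  set z := a • x + b • y with hz
  have hzs : z ∈ s := hs hx hy ha hb hab
  obtain rfl : a = 1 - b := eq_sub_of_add_eq hab
  have hxz : x - z = b • (x - y) := by rw [hz]; module
  have hyz : y - z = -((1 - b) • (x - y)) := by rw [hz]; module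
  have hfx := mul_le_mul_of_nonneg_left (hf z hzs x hx) ha
  have hfy := mul_le_mul_of_nonneg_left (hf z hzs y hy) hb
  simp only [hxz, hyz, map_neg, map_smul, norm_neg, norm_smul_of_nonneg, ha, hb, smul_eq_mul]
    at hfx hfy ⊢
  linear_combination hfx + hfy

theorem quadratic_le_of_strongly_monotone_fderiv (hs : Convex ℝ s)
    (hf : ∀ x ∈ s, HasFDerivWithinAt f (f' x) s x)
    (hmono : ∀ x ∈ s, ∀ y ∈ s, m * ‖y - x‖ ^ 2 ≤ (f' y - f' x) (y - x))
    {x y : E} (hx : x ∈ s) (hy : y ∈ s) :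
    f x + f' x (y - x) + m / 2 * ‖y - x‖ ^ 2 ≤ f y := by
  let γ : ℝ → E := AffineMap.lineMap x y
  let φ : ℝ → ℝ := fun t ↦ f (γ t) - (t * f' x (y - x) + m / 2 * ‖y - x‖ ^ 2 * t ^ 2)
  let φ' : ℝ → ℝ := fun t ↦ f' (γ t) (y - x) - (f' x (y - x) + m * ‖y - x‖ ^ 2 * t)
  have hγ : Set.MapsTo γ (Set.Icc 0 1) s := hs.mapsTo_lineMap hx hy
  have hφ : ∀ t ∈ Set.Icc (0 : ℝ) 1, HasDerivWithinAt φ (φ' t) (Set.Icc 0 1) t := fun t ht ↦ by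
    have hfγ := (hf _ (hγ ht)).comp_hasDerivWithinAt t AffineMap.hasDerivWithinAt_lineMap hγ
    have hquad := (((hasDerivAt_id t).mul_const (f' x (y - x))).add
      ((hasDerivAt_pow 2 t).const_mul (m / 2 * ‖y - x‖ ^ 2))).hasDerivWithinAt (s := Set.Icc 0 1)
    refine (hfγ.sub hquad).congr_deriv ?_
    simp only [φ', γ]
    ring
  have hφ'_nonneg : ∀ t ∈ Set.Ioo (0 : ℝ) 1, 0 ≤ φ' t := fun t ht ↦ by
    have hγx : γ t - x = t • (y - x) := by simp [γ, AffineMap.lineMap_apply]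
    have hmono_t := hmono x hx (γ t) (hγ (Set.Ioo_subset_Icc_self ht))
    rw [hγx, norm_smul_of_nonneg ht.1.le, map_smul, smul_eq_mul,
      sub_apply] at hmono_t
    refine nonneg_of_mul_nonneg_right (?_ : 0 ≤ t * φ' t) ht.1
    linear_combination hmono_t
  have hφ_mono : MonotoneOn φ (Set.Icc 0 1) := by
    refine monotoneOn_of_hasDerivWithinAt_nonneg (f' := φ') (convex_Icc 0 1)
      (fun t ht ↦ (hφ t ht).continuousWithinAt) (fun t ht ↦ ?_) (by simpa using hφ'_nonneg)
    exact (hφ t (interior_subset ht)).mono interior_subset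
  have hφ₀₁ : φ 0 ≤ φ 1 :=
    hφ_mono (Set.left_mem_Icc.2 zero_le_one) (Set.right_mem_Icc.2 zero_le_one) zero_le_one
  simp only [φ, γ, AffineMap.lineMap_apply_zero, AffineMap.lineMap_apply_one] at hφ₀₁
  linear_combination hφ₀₁

theorem strongConvexOn_of_strongly_monotone_fderiv (hs : Convex ℝ s)
    (hf : ∀ x ∈ s, HasFDerivWithinAt f (f' x) s x)
    (hmono : ∀ x ∈ s, ∀ y ∈ s, m * ‖y - x‖ ^ 2 ≤ (f' y - f' x) (y - x)) :
    StrongConvexOn s m f :=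
  strongConvexOn_of_forall_quadratic_le hs fun _ hx _ hy ↦
    quadratic_le_of_strongly_monotone_fderiv hs hf hmono hx hy

theorem strongConvexOn_neg_of_lipschitz_fderiv (hs : Convex ℝ s)
    (hf : ∀ x ∈ s, HasFDerivWithinAt f (f' x) s x)
    (hlip : ∀ x ∈ s, ∀ y ∈ s, ‖f' x - f' y‖ ≤ k * ‖x - y‖) :
    StrongConvexOn s (-k) f := by
  refine strongConvexOn_of_strongly_monotone_fderiv hs hf fun x hx y hy ↦ ?_
  have hbound : |(f' y - f' x) (y - x)| ≤ k * ‖y - x‖ ^ 2 :=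
    calc |(f' y - f' x) (y - x)|
        ≤ k * ‖y - x‖ * ‖y - x‖ := (f' y - f' x).le_of_opNorm_le (hlip y hy x hx) (y - x)
      _ = k * ‖y - x‖ ^ 2 := by ring
  linarith [neg_le_of_abs_le hbound]

end NormedSpace

section InnerProductSpace

variable {H : Type*} [NormedAddCommGroup H] [InnerProductSpace ℝ H] {s : Set H}

theorem strongConvexOn_neg_of_lipschitz_gradient [CompleteSpace H] {f : H → ℝ} {f' : H → H} {k : ℝ}
    (hs : Convex ℝ s) (hf : ∀ x ∈ s, HasGradientWithinAt f (f' x) s x)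
    (hlip : ∀ x ∈ s, ∀ y ∈ s, ‖f' x - f' y‖ ≤ k * ‖x - y‖) :
    StrongConvexOn s (-k) f :=
  strongConvexOn_neg_of_lipschitz_fderiv hs (fun x hx ↦ (hf x hx).hasFDerivWithinAt)
    fun x hx y hy ↦ by simpa only [← map_sub, LinearIsometryEquiv.norm_map] using hlip x hx y hy

theorem strongConvexOn_norm_sq (hs : Convex ℝ s) : StrongConvexOn s 2 fun x ↦ ‖x‖ ^ 2 := by
  simpa [strongConvexOn_iff_convex] using convexOn_const (0 : ℝ) hs

theorem unique_min_on_sphere_from_penalized_min_general {I J : H → ℝ} {ν L lam r : ℝ} {ustar : H}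
    (hI : StrongConvexOn s (-ν) I) (hJ : StrongConvexOn s (-L) J)
    (hlam₀ : 0 ≤ lam) (hlam : L < lam * (2 - ν))
    (hustar : ustar ∈ {u ∈ s | ‖u‖ ^ 2 + I u = r})
    (hmin : IsMinOn (fun u ↦ J u + lam * (‖u‖ ^ 2 + I u)) s ustar) :
    IsMinOn J {u ∈ s | ‖u‖ ^ 2 + I u = r} ustar ∧
      ∀ u ∈ {u ∈ s | ‖u‖ ^ 2 + I u = r}, J u = J ustar → u = ustar := by
  refine ⟨isMinOn_levelSet_of_isMinOn_add_mul hmin hustar.2, fun u hu hJu ↦ ?_⟩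
  have hstrict : StrictConvexOn ℝ s fun u ↦ J u + lam * (‖u‖ ^ 2 + I u) :=
    (strongConvexOn_add hJ (strongConvexOn_const_mul hlam₀
      (strongConvexOn_add (strongConvexOn_norm_sq hI.1) hI))).strictConvexOn (by linarith)
  have hmin_u : IsMinOn (fun u ↦ J u + lam * (‖u‖ ^ 2 + I u)) s u := by
    simpa only [IsMinOn, IsMinFilter, hJu, hu.2, hustar.2] using hmin
  exact hstrict.eq_of_isMinOn hmin_u hmin hu.1 hustar.1

end InnerProductSpace

theorem unique_min_on_sphere_from_penalized_min
    {H : Type*} [NormedAddCommGroup H] [InnerProductSpace ℝ H] [CompleteSpace H]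
    (V : Submodule ℝ H) (hV : IsClosed (V : Set H))
    (I J : H → ℝ) (I' J' : H → H) (ν L : ℝ)
    (hν₀ : 0 ≤ ν) (hν₂ : ν < 2) (hL : 0 < L)
    (hIgrad : ∀ u, HasGradientAt I (I' u) u)
    (hJgrad : ∀ u, HasGradientAt J (J' u) u)
    (hIlip : ∀ u v, ‖I' u - I' v‖ ≤ ν * ‖u - v‖)
    (hJlip : ∀ u v, ‖J' u - J' v‖ ≤ L * ‖u - v‖)
    (r : ℝ) (hr₀ : 0 < r)
    (Cr : Set H) (hCr : Cr = {u : H | u ∈ V ∧ ‖u‖ ^ 2 + I u = r})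
    (lam : ℝ) (hlam : L / (2 - ν) < lam)
    (ustar : H) (hustarC : ustar ∈ Cr)
    (hmin : ∀ u ∈ V, J ustar + lam * (‖ustar‖ ^ 2 + I ustar)
      ≤ J u + lam * (‖u‖ ^ 2 + I u)) :
    (∀ u ∈ Cr, J ustar ≤ J u) ∧ (∀ u ∈ Cr, J u = J ustar → u = ustar) := by
  subst hCr
  have hgap : 0 < 2 - ν := sub_pos.2 hν₂
  exact unique_min_on_sphere_from_penalized_min_general
    (strongConvexOn_neg_of_lipschitz_gradient V.convex
      (fun u _ ↦ (hIgrad u).hasFDerivAt.hasFDerivWithinAt) fun u _ v _ ↦ hIlip u v)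
    (strongConvexOn_neg_of_lipschitz_gradient V.convex
      (fun u _ ↦ (hJgrad u).hasFDerivAt.hasFDerivWithinAt) fun u _ v _ ↦ hJlip u v)
    ((div_pos hL hgap).trans hlam).le ((div_lt_iff₀ hgap).1 hlam) hustarC hmin
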